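/- (Coarea inequality for Hausdorff content.) Let m > 0 and 0 ≤ r₁ < r₂ be real numbers, X a metric space, Y a subset of X, and x a point of X. Let B₁ and B₂ be the closed metric balls of radii r₁ and r₂ centered at x, let A = B₂ ∖ B₁, and for s ∈ (r₁, r₂) let S_s = {y ∈ X : d(x,y) = s}. Then there exists s ∈ (r₁, r₂) such that HC_{m−1}(S_s ∩ Y) ≤ (2/(r₂ − r₁))·HC_m(A ∩ Y). -/

import Mathlib

/-!
Cover `A` by balls `B(pᵢ, rᵢ)`. A `K`-Lipschitz map `f : X → Z` sends `B(pᵢ, rᵢ)` into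
`B(f pᵢ, K rᵢ)`, so the fiber of `A` over `z` is covered by those balls with
`z ∈ B(f pᵢ, K rᵢ)`, and its `(m - k)`-content is at most
`g(z) = ∑ rᵢ ^ (m - k) · 1_{B(f pᵢ, K rᵢ)}(z)`. If balls of radius `r` in `Z` have measure at
most `C r ^ k`, then `∫ g ≤ C K ^ k ∑ rᵢ ^ m`.

The pointwise infimum `G` of the functions `g` along a minimizing sequence of coverings is
measurable, dominates the content of every fiber, and satisfies `∫ G ≤ C K ^ k HC_m(A)` with no
error term; at some point of any given set of positive finite measure `G` does not exceed its
average. Averaging `G` rather than the content of the fibers avoids the question whether the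
latter is measurable in `z`. The coarea inequality for spheres is the case `f = dist x`, with
`Z = ℝ`, `K = k = 1` and `C = 2`.
-/

open Metric Set
open scoped ENNReal NNReal

/-- The `m`-dimensional Hausdorff content of a subset `A` of a metric space `X`:
the infimum, over all countable coverings of `A` by closed metric balls of `X` with
radii `r_i`, of `∑ r_i ^ m`. -/
noncomputable def HC {X : Type*} [MetricSpace X] (m : ℝ) (A : Set X) : ℝ≥0∞ :=
  ⨅ (S : Set (X × ℝ≥0)) (_ : S.Countable)
    (_ : A ⊆ ⋃ p ∈ S, Metric.closedBall p.1 (p.2 : ℝ)),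
    ∑' p : S, ((p : X × ℝ≥0).2 : ℝ≥0∞) ^ m


open Filter MeasureTheory Topology

section HausdorffContent

variable {X : Type*} [MetricSpace X] {m : ℝ} {A B : Set X}

lemma HC_le_tsum {S : Set (X × ℝ≥0)} (hS : S.Countable)
    (hA : A ⊆ ⋃ p ∈ S, closedBall p.1 (p.2 : ℝ)) :
    HC m A ≤ ∑' p : S, (p.1.2 : ℝ≥0∞) ^ m :=
  iInf_le_of_le S (iInf₂_le_of_le hS hA le_rfl)

lemma exists_cover_tsum_lt_of_HC_lt {c : ℝ≥0∞} (h : HC m A < c) :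
    ∃ S : Set (X × ℝ≥0), S.Countable ∧ A ⊆ (⋃ p ∈ S, closedBall p.1 (p.2 : ℝ)) ∧
      ∑' p : S, (p.1.2 : ℝ≥0∞) ^ m < c := by
  simpa only [HC, iInf_lt_iff, exists_prop] using h

lemma HC_mono (h : A ⊆ B) : HC m A ≤ HC m B :=
  le_iInf fun _ => le_iInf₂ fun hS hB => HC_le_tsum hS (h.trans hB)

end HausdorffContent

-- Equality fails for `x = 0` and `m = 0 < k`, where the left side is `∞ * 0 = 0`.
lemma rpow_sub_mul_rpow_le (x : ℝ≥0∞) (m k : ℝ) : x ^ (m - k) * x ^ k ≤ x ^ m := by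
  rcases eq_or_ne x 0 with rfl | h0
  · simp only [ENNReal.zero_rpow_def]
    split_ifs <;> first | grind | simp
  rcases eq_or_ne x ∞ with rfl | htop
  · simp only [ENNReal.top_rpow_def]
    split_ifs <;> first | grind | simp
  · rw [← ENNReal.rpow_add _ _ h0 htop, sub_add_cancel]

section Fibers

variable {X Z : Type*} [PseudoMetricSpace Z]

/-- The sum of `r ^ d` over the balls `B(p, r)` of the family `S` such that `z ∈ B(f p, K r)`. When
`f` is `K`-Lipschitz, these include all the balls of `S` that meet the fiber of `f` over `z`. -/
noncomputable def fiberSum (f : X → Z) (K : ℝ≥0) (d : ℝ) (S : Set (X × ℝ≥0)) (z : Z) : ℝ≥0∞ :=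
  ∑' p : S, (closedBall (f p.1.1) (K * p.1.2)).indicator (fun _ => (p.1.2 : ℝ≥0∞) ^ d) z

lemma fiberSum_eq_tsum_sep (f : X → Z) (K : ℝ≥0) (d : ℝ) (S : Set (X × ℝ≥0)) (z : Z) :
    fiberSum f K d S z =
      ∑' p : {p ∈ S | z ∈ closedBall (f p.1) (K * p.2)}, (p.1.2 : ℝ≥0∞) ^ d := by
  classical
  rw [fiberSum,
    tsum_subtype S fun p => (closedBall (f p.1) (K * p.2)).indicator (fun _ => (p.2 : ℝ≥0∞) ^ d) z,
    tsum_subtype {p ∈ S | z ∈ closedBall (f p.1) (K * p.2)} fun p => (p.2 : ℝ≥0∞) ^ d]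
  simp only [indicator_apply, mem_sep_iff, ite_and]

lemma HC_fiber_le_fiberSum [MetricSpace X] {f : X → Z} {K : ℝ≥0} {S : Set (X × ℝ≥0)}
    {A : Set X} (hf : LipschitzWith K f) (hS : S.Countable)
    (hA : A ⊆ ⋃ p ∈ S, closedBall p.1 (p.2 : ℝ)) (d : ℝ) (z : Z) :
    HC d (f ⁻¹' {z} ∩ A) ≤ fiberSum f K d S z := by
  rw [fiberSum_eq_tsum_sep]
  refine HC_le_tsum (hS.mono (sep_subset _ _)) ?_
  rintro y ⟨rfl, hyA⟩
  obtain ⟨p, hpS, hyp⟩ := mem_iUnion₂.1 (hA hyA)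
  exact mem_iUnion₂.2 ⟨p, ⟨hpS, hf.mapsTo_closedBall p.1 p.2 hyp⟩, hyp⟩

variable [MeasurableSpace Z] [OpensMeasurableSpace Z]

lemma measurable_fiberSum (f : X → Z) (K : ℝ≥0) (d : ℝ) {S : Set (X × ℝ≥0)} (hS : S.Countable) :
    Measurable (fiberSum f K d S) := by
  have := hS.to_subtype
  exact Measurable.tsum fun _ => measurable_const.indicator measurableSet_closedBall

variable {μ : Measure Z} {C : ℝ≥0} {k : ℝ}

lemma lintegral_fiberSum_le
    (hμ : ∀ (z : Z) (r : ℝ≥0), μ (closedBall z r) ≤ C * (r : ℝ≥0∞) ^ k)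
    (f : X → Z) (K : ℝ≥0) (m : ℝ) {S : Set (X × ℝ≥0)} (hS : S.Countable) :
    ∫⁻ z, fiberSum f K (m - k) S z ∂μ ≤
      C * (K : ℝ≥0∞) ^ k * ∑' p : S, (p.1.2 : ℝ≥0∞) ^ m := by
  have := hS.to_subtype
  have lintegral_term_le (p : X × ℝ≥0) :
      ∫⁻ z, (closedBall (f p.1) (K * p.2)).indicator (fun _ => (p.2 : ℝ≥0∞) ^ (m - k)) z ∂μ ≤
        C * (K : ℝ≥0∞) ^ k * (p.2 : ℝ≥0∞) ^ m :=
    calc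
      _ = (p.2 : ℝ≥0∞) ^ (m - k) * μ (closedBall (f p.1) (K * p.2)) :=
        lintegral_indicator_const measurableSet_closedBall _
      _ ≤ (p.2 : ℝ≥0∞) ^ (m - k) * (C * (K * p.2 : ℝ≥0∞) ^ k) := by
        gcongr
        exact_mod_cast hμ (f p.1) (K * p.2)
      _ = C * (K : ℝ≥0∞) ^ k * ((p.2 : ℝ≥0∞) ^ (m - k) * (p.2 : ℝ≥0∞) ^ k) := by
        rw [ENNReal.mul_rpow_of_ne_top (by simp) (by simp)]
        ring
      _ ≤ C * (K : ℝ≥0∞) ^ k * (p.2 : ℝ≥0∞) ^ m := by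
        gcongr
        exact rpow_sub_mul_rpow_le _ m k
  calc
    _ = ∑' p : S, ∫⁻ z, (closedBall (f p.1.1) (K * p.1.2)).indicator
          (fun _ => (p.1.2 : ℝ≥0∞) ^ (m - k)) z ∂μ :=
      lintegral_tsum fun _ => (measurable_const.indicator measurableSet_closedBall).aemeasurable
    _ ≤ ∑' p : S, C * (K : ℝ≥0∞) ^ k * (p.1.2 : ℝ≥0∞) ^ m :=
      ENNReal.tsum_le_tsum fun p => lintegral_term_le p
    _ = C * (K : ℝ≥0∞) ^ k * ∑' p : S, (p.1.2 : ℝ≥0∞) ^ m := ENNReal.tsum_mul_left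

variable [MetricSpace X] {f : X → Z} {K : ℝ≥0}

theorem exists_measurable_HC_fiber_le_lintegral_le (hf : LipschitzWith K f) (hK : K ≠ 0)
    (hC : C ≠ 0)
    (hμ : ∀ (z : Z) (r : ℝ≥0), μ (closedBall z r) ≤ C * (r : ℝ≥0∞) ^ k) (m : ℝ) (A : Set X) :
    ∃ G : Z → ℝ≥0∞, Measurable G ∧ (∀ z, HC (m - k) (f ⁻¹' {z} ∩ A) ≤ G z) ∧
      ∫⁻ z, G z ∂μ ≤ C * (K : ℝ≥0∞) ^ k * HC m A := by
  rcases eq_or_ne (HC m A) ∞ with htop | hfin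
  · have hconst : (C : ℝ≥0∞) * (K : ℝ≥0∞) ^ k ≠ 0 := by simp [hC, hK]
    exact ⟨fun _ => ∞, measurable_const, fun _ => le_top, by simp [htop, ENNReal.mul_top hconst]⟩
  obtain ⟨u, -, hu, hu_lim⟩ := exists_seq_strictAnti_tendsto' hfin.lt_top
  choose S hS hA hSu using fun n => exists_cover_tsum_lt_of_HC_lt (hu n).1
  refine ⟨fun z => ⨅ n, fiberSum f K (m - k) (S n) z,
    Measurable.iInf fun n => measurable_fiberSum f K (m - k) (hS n),
    fun z => le_iInf fun n => HC_fiber_le_fiberSum hf (hS n) (hA n) (m - k) z, ?_⟩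
  have hconst_top : (C : ℝ≥0∞) * (K : ℝ≥0∞) ^ k ≠ ∞ :=
    ENNReal.mul_ne_top ENNReal.coe_ne_top (ENNReal.rpow_ne_top_of_ne_zero (by simpa) (by simp))
  have hlim : Tendsto (fun n => C * (K : ℝ≥0∞) ^ k * u n) atTop
      (𝓝 (C * (K : ℝ≥0∞) ^ k * HC m A)) :=
    ENNReal.Tendsto.const_mul hu_lim (Or.inr hconst_top)
  refine ge_of_tendsto' hlim fun n => ?_
  calc
    _ ≤ ∫⁻ z, fiberSum f K (m - k) (S n) z ∂μ := lintegral_mono fun _ => iInf_le _ n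
    _ ≤ C * (K : ℝ≥0∞) ^ k * ∑' p : S n, (p.1.2 : ℝ≥0∞) ^ m :=
      lintegral_fiberSum_le hμ f K m (hS n)
    _ ≤ C * (K : ℝ≥0∞) ^ k * u n := by
      gcongr
      exact (hSu n).le

theorem stmt5_general (hf : LipschitzWith K f) (hK : K ≠ 0) (hC : C ≠ 0)
    (hμ : ∀ (z : Z) (r : ℝ≥0), μ (closedBall z r) ≤ C * (r : ℝ≥0∞) ^ k) (m : ℝ) (A : Set X)
    {I : Set Z} (hI : μ I ≠ 0) (hI' : μ I ≠ ∞) :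
    ∃ z ∈ I, HC (m - k) (f ⁻¹' {z} ∩ A) ≤ C * (K : ℝ≥0∞) ^ k / μ I * HC m A := by
  obtain ⟨G, hG, hle, hint⟩ := exists_measurable_HC_fiber_le_lintegral_le hf hK hC hμ m A
  obtain ⟨z, hz, hGz⟩ := exists_le_setLAverage hI hI' hG.aemeasurable
  refine ⟨z, hz, ?_⟩
  calc
    HC (m - k) (f ⁻¹' {z} ∩ A) ≤ G z := hle z
    _ ≤ (∫⁻ w in I, G w ∂μ) / μ I := by rwa [← setLAverage_eq]
    _ ≤ C * (K : ℝ≥0∞) ^ k * HC m A / μ I := by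
      gcongr
      exact (setLIntegral_le_lintegral I G).trans hint
    _ = C * (K : ℝ≥0∞) ^ k / μ I * HC m A := ENNReal.mul_div_right_comm

end Fibers

theorem exists_mem_Ioo_HC_fiber_le {X : Type*} [MetricSpace X] {f : X → ℝ} {K : ℝ≥0}
    (hf : LipschitzWith K f) (hK : K ≠ 0) {a b : ℝ} (hab : a < b) (m : ℝ) (Y : Set X) :
    ∃ s ∈ Ioo a b, HC (m - 1) (f ⁻¹' {s} ∩ Y) ≤
      ENNReal.ofReal (2 * K / (b - a)) * HC m (f ⁻¹' Ioo a b ∩ Y) := by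
  have volume_closedBall_le (z : ℝ) (r : ℝ≥0) :
      volume (closedBall z r) ≤ (2 : ℝ≥0) * (r : ℝ≥0∞) ^ (1 : ℝ) := by
    simp [Real.volume_closedBall, ENNReal.ofReal_mul]
  have volume_Ioo_ne_zero : volume (Ioo a b) ≠ 0 := by simpa using hab
  obtain ⟨s, hs, hle⟩ := stmt5_general hf hK two_ne_zero volume_closedBall_le m
    (f ⁻¹' Ioo a b ∩ Y) volume_Ioo_ne_zero measure_Ioo_lt_top.ne
  have fiber_subset : f ⁻¹' {s} ∩ Y ⊆ f ⁻¹' {s} ∩ (f ⁻¹' Ioo a b ∩ Y) := by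
    rintro y ⟨rfl, hyY⟩
    exact ⟨rfl, hs, hyY⟩
  refine ⟨s, hs, (HC_mono fiber_subset).trans (hle.trans_eq ?_)⟩
  simp [ENNReal.ofReal_div_of_pos (sub_pos.2 hab), ENNReal.ofReal_mul]

lemma dist_preimage_Ioo_subset {X : Type*} [PseudoMetricSpace X] (x : X) (a b : ℝ) :
    dist x ⁻¹' Ioo a b ⊆ closedBall x b \ closedBall x a := fun y hy => by
  simpa [dist_comm y x] using And.intro hy.2.le hy.1

/-- Coarea inequality for Hausdorff content: for `m > 0`, `0 ≤ r₁ < r₂`, a subset `Y` of a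
metric space `X` and a point `x`, there exists `s ∈ (r₁, r₂)` such that
`HC_{m−1}(S(x,s) ∩ Y) ≤ (2/(r₂−r₁))·HC_m((B(x,r₂) ∖ B(x,r₁)) ∩ Y)`. -/
theorem stmt5 {X : Type*} [MetricSpace X] (m : ℝ) (hm : 0 < m)
    (r₁ r₂ : ℝ) (hr₁ : 0 ≤ r₁) (h₁₂ : r₁ < r₂) (Y : Set X) (x : X) :
    ∃ s ∈ Set.Ioo r₁ r₂,
      HC (m - 1) ({y : X | dist x y = s} ∩ Y) ≤
        ENNReal.ofReal (2 / (r₂ - r₁)) *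
          HC m ((Metric.closedBall x r₂ \ Metric.closedBall x r₁) ∩ Y) := by
  obtain ⟨s, hs, hle⟩ :=
    exists_mem_Ioo_HC_fiber_le (LipschitzWith.dist_right x) one_ne_zero h₁₂ m Y
  rw [NNReal.coe_one, mul_one] at hle
  exact ⟨s, hs, hle.trans
    (mul_right_mono (HC_mono (inter_subset_inter_left Y (dist_preimage_Ioo_subset x r₁ r₂))))⟩
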